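/- Let K be a field of characteristic 0 and let p, q ∈ Kˣ, neither of which is a root of unity. Let θ : A_1^p(K) → A_1^q(K) be a K-algebra isomorphism, let X, Y denote the images in A_1^p(K) of the two free generators, and let x, y denote those in A_1^q(K). Then θ(X) and θ(Y) both lie in the K-linear span of {1, x, y}; that is, there exist α, β, γ, α', β', γ' ∈ K with θ(X) = α·x + β·y + γ·1 and θ(Y) = α'·x + β'·y + γ'·1. -/

import Mathlib

/-- The defining relation of the quantum Weyl algebra `A_1^q(K)`:
`x * y = q • (y * x) + 1`, where `x, y` are the two free generators. -/
inductive WeylRel (K : Type*) [Field K] (q : K) :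
    FreeAlgebra K (Fin 2) → FreeAlgebra K (Fin 2) → Prop
  | rel : WeylRel K q (FreeAlgebra.ι K 0 * FreeAlgebra.ι K 1)
      (q • (FreeAlgebra.ι K 1 * FreeAlgebra.ι K 0) + 1)

/-- The quantum Weyl algebra `A_1^q(K)`. -/
abbrev QuantumWeyl (K : Type*) [Field K] (q : K) := RingQuot (WeylRel K q)

/-- The images of the two free generators in `A_1^q(K)`; `wgen K q 0` is `x`
and `wgen K q 1` is `y`. -/
noncomputable def wgen (K : Type*) [Field K] (q : K) (i : Fin 2) : QuantumWeyl K q :=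
  RingQuot.mkAlgHom K (WeylRel K q) (FreeAlgebra.ι K i)

/-!
Write `z = ⁅x, y⁆` for the commutator of the generators of `A_1^q(K)`. Since `x * z = q * z * x` and
`z * y = q * y * z`, the element `z` divides every commutator. Hence the images under an isomorphism
of the commutators of the generators divide each other and differ by a unit, and units are scalars:
this is seen in the skew Laurent ring `K[X][T, T⁻¹; σ]`, in which `x = T`, `z = X` and every
invertible element is homogeneous in `T`. So `θ X` and `θ Y` commute with `z` up to the factors
`p` and `p⁻¹`, and `z` distinguishes the powers of `T`, whence `θ X = f * T ^ n` and
`θ Y = g * T ^ (-n)`; comparing `X`-degrees in their commutator, `deg f + deg g = 1`. On the other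
hand, in an element of `A_1^q(K)` the coefficient of `T ^ (-m)` is divisible by a polynomial of
degree `m`, which leaves only `n = 1` and `n = -1`.
-/
section SkewMonoidAlgebra

open SkewMonoidAlgebra

section AddMonoid

variable {R G : Type*} [AddMonoid R] {u : SkewMonoidAlgebra R G}

theorem support_nonempty_of_ne_zero (hu : u ≠ 0) : u.support.Nonempty :=
  Finset.nonempty_iff_ne_empty.2 (support_eq_empty.not.2 hu)

theorem eq_single_of_coeff_eq_zero (g : G)
    (h : ∀ g', u.coeff g' ≠ 0 → g' = g) : u = single g (u.coeff g) := by
  classical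
  ext g'
  rw [coeff_single_apply]
  split_ifs with hg
  · rw [hg]
  · exact not_not.1 fun hne => hg (h g' hne).symm

end AddMonoid

variable {R G : Type*} [Semiring R] [Group G] [MulSemiringAction G R] {u v : SkewMonoidAlgebra R G}

theorem coeff_mul_of_uniqueMul {a b : G} (h : UniqueMul u.support v.support a b) :
    (u * v).coeff (a * b) = u.coeff a * a • v.coeff b := by
  rw [coeff_mul_left, sum_def', Finset.sum_eq_single a, inv_mul_cancel_left]
  · intro c hc hca
    suffices v.coeff (c⁻¹ * (a * b)) = 0 by rw [this, smul_zero, mul_zero]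
    by_contra hv
    exact hca (h hc (mem_support_iff.2 hv) (mul_inv_cancel_left c _)).1
  · intro ha
    rw [notMem_support_iff.1 ha, zero_mul]

variable [NoZeroDivisors R]

theorem coeff_mul_ne_zero_of_uniqueMul {a b : G} (ha : a ∈ u.support) (hb : b ∈ v.support)
    (h : UniqueMul u.support v.support a b) : (u * v).coeff (a * b) ≠ 0 := by
  rw [coeff_mul_of_uniqueMul h]
  exact mul_ne_zero (mem_support_iff.1 ha) ((smul_ne_zero_iff_ne a).2 (mem_support_iff.1 hb))

theorem noZeroDivisors_skewMonoidAlgebra [UniqueProds G] :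
    NoZeroDivisors (SkewMonoidAlgebra R G) where
  eq_zero_or_eq_zero_of_mul_eq_zero {u v} huv := by
    contrapose! huv with hne
    obtain ⟨a, ha, b, hb, hab⟩ := UniqueProds.uniqueMul_of_nonempty
      (support_nonempty_of_ne_zero hne.1) (support_nonempty_of_ne_zero hne.2)
    intro h
    exact coeff_mul_ne_zero_of_uniqueMul ha hb hab (by rw [h, coeff_zero, Finsupp.zero_apply])

/-- A pair of supports with at least two products would contain two unique products, and the
coefficients there cannot vanish. -/
theorem exists_eq_single_of_mul_eq_one [Nontrivial R] [TwoUniqueProds G] (huv : u * v = 1) :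
    ∃ (g : G) (r s : R), u = single g r ∧ v = single g⁻¹ s ∧ r * g • s = 1 := by
  have unique_mul_eq_one : ∀ a ∈ u.support, ∀ b ∈ v.support,
      UniqueMul u.support v.support a b → a * b = 1 := fun a ha b hb hab => by
    by_contra hne
    apply coeff_mul_ne_zero_of_uniqueMul ha hb hab
    rw [huv, coeff_one, Finsupp.single_eq_of_ne hne]
  have card_le_one : u.support.card * v.support.card ≤ 1 := by
    by_contra! hlt
    obtain ⟨⟨a, b⟩, hab, ⟨a', b'⟩, hab', hne, hu, hu'⟩ :=
      TwoUniqueProds.uniqueMul_of_one_lt_card hlt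
    rw [Finset.mem_product] at hab hab'
    have h := hu hab'.1 hab'.2 ((unique_mul_eq_one _ hab'.1 _ hab'.2 hu').trans
      (unique_mul_eq_one _ hab.1 _ hab.2 hu).symm)
    exact hne (Prod.ext h.1.symm h.2.symm)
  have hu : u.support.Nonempty := support_nonempty_of_ne_zero fun h => by simp [h] at huv
  have hv : v.support.Nonempty := support_nonempty_of_ne_zero fun h => by simp [h] at huv
  have card_eq_one : u.support.card = 1 ∧ v.support.card = 1 :=
    mul_eq_one.1 (card_le_one.antisymm (Nat.mul_pos hu.card_pos hv.card_pos))
  obtain ⟨⟨a, ha⟩, ⟨b, hb⟩⟩ := card_eq_one.imp Finset.card_eq_one.1 Finset.card_eq_one.1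
  obtain rfl : b = a⁻¹ := eq_inv_of_mul_eq_one_right <|
    unique_mul_eq_one a (by simp [ha]) b (by simp [hb]) (by simp [UniqueMul, ha, hb])
  have hu : u = single a (u.coeff a) := eq_single_of_coeff_eq_zero a fun g hg => by
    simpa [ha] using mem_support_iff.2 hg
  have hv : v = single a⁻¹ (v.coeff a⁻¹) := eq_single_of_coeff_eq_zero a⁻¹ fun g hg => by
    simpa [hb] using mem_support_iff.2 hg
  refine ⟨a, _, _, hu, hv, single_injective (1 : G) ?_⟩
  calc single 1 (u.coeff a * a • v.coeff a⁻¹)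
    _ = single a (u.coeff a) * single a⁻¹ (v.coeff a⁻¹) := by
        rw [single_mul_single, mul_inv_cancel]
    _ = single 1 (1 : R) := by rw [← hu, ← hv, huv, single_one_one]

end SkewMonoidAlgebra

section Adjoin

section Semiring

variable {R A : Type*} [CommSemiring R] [Semiring A] [Algebra R A] {s : Set A}

theorem dvd_mul_of_adjoin_eq_top {z : A} (hs : Algebra.adjoin R s = ⊤)
    (hz : ∀ a ∈ s, z ∣ a * z) (a : A) : z ∣ a * z := by
  have ha : a ∈ Algebra.adjoin R s := hs ▸ Algebra.mem_top
  induction ha using Algebra.adjoin_induction with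
  | mem a ha => exact hz a ha
  | algebraMap r => exact ⟨_, Algebra.commutes r z⟩
  | add a b _ _ ha hb => rw [add_mul]; exact dvd_add ha hb
  | mul a b _ _ ha hb =>
    obtain ⟨c, hc⟩ := hb
    rw [mul_assoc, hc, ← mul_assoc]
    exact ha.mul_right c

theorem submodule_eq_top_of_adjoin_eq_top (hs : Algebra.adjoin R s = ⊤) (M : Submodule R A)
    (one_mem : 1 ∈ M) (mul_mem : ∀ a ∈ s, ∀ m ∈ M, a * m ∈ M) : M = ⊤ := by
  suffices ∀ a ∈ Algebra.adjoin R s, ∀ m ∈ M, a * m ∈ M from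
    Submodule.eq_top_iff'.2 fun a => mul_one a ▸ this a (hs ▸ Algebra.mem_top) 1 one_mem
  intro a ha
  induction ha using Algebra.adjoin_induction with
  | mem a ha => exact mul_mem a ha
  | algebraMap r => exact fun m hm => Algebra.smul_def r m ▸ M.smul_mem r hm
  | add a b _ _ ha hb => exact fun m hm => add_mul a b m ▸ M.add_mem (ha m hm) (hb m hm)
  | mul a b _ _ ha hb => exact fun m hm => mul_assoc a b m ▸ ha _ (hb m hm)

end Semiring

variable {R A : Type*} [CommRing R] [Ring A] [Algebra R A] {s : Set A} {z : A}

theorem dvd_lie_of_forall_mem_dvd_lie (hs : Algebra.adjoin R s = ⊤) (hz : ∀ a, z ∣ a * z) {a : A}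
    (h : ∀ b ∈ s, z ∣ ⁅a, b⁆) (b : A) : z ∣ ⁅a, b⁆ := by
  have hb : b ∈ Algebra.adjoin R s := hs ▸ Algebra.mem_top
  induction hb using Algebra.adjoin_induction with
  | mem b hb => exact h b hb
  | algebraMap r => simp [Ring.lie_def, Algebra.commutes r a]
  | add b c _ _ hb hc =>
    have additive : ⁅a, b + c⁆ = ⁅a, b⁆ + ⁅a, c⁆ := by
      simp only [Ring.lie_def]; noncomm_ring
    exact additive ▸ dvd_add hb hc
  | mul b c _ _ hb hc =>
    have leibniz : ⁅a, b * c⁆ = ⁅a, b⁆ * c + b * ⁅a, c⁆ := by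
      simp only [Ring.lie_def]; noncomm_ring
    obtain ⟨d, hd⟩ := hc
    rw [leibniz, hd, ← mul_assoc]
    exact dvd_add (hb.mul_right c) ((hz b).mul_right d)

theorem dvd_lie_of_adjoin_eq_top (hs : Algebra.adjoin R s = ⊤) (hz : ∀ a ∈ s, z ∣ a * z)
    (h : ∀ a ∈ s, ∀ b ∈ s, z ∣ ⁅a, b⁆) (a b : A) : z ∣ ⁅a, b⁆ := by
  have hz' := dvd_mul_of_adjoin_eq_top hs hz
  refine dvd_lie_of_forall_mem_dvd_lie hs hz' (fun b hb => ?_) b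
  rw [show ⁅a, b⁆ = -⁅b, a⁆ from (neg_sub _ _).symm, dvd_neg]
  exact dvd_lie_of_forall_mem_dvd_lie hs hz' (fun a ha => h b hb a ha) a

end Adjoin

section QuantumWeylRelation

variable {R A : Type*} [CommRing R] [Ring A] [Algebra R A] {q : R} {x y : A}

theorem lie_eq_one_add (h : x * y = q • (y * x) + 1) : ⁅x, y⁆ = 1 + (q - 1) • (y * x) := by
  rw [Ring.lie_def, h]
  module

theorem mul_lie_eq (h : x * y = q • (y * x) + 1) : x * ⁅x, y⁆ = q • (⁅x, y⁆ * x) := by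
  have hxyx : x * (y * x) = q • (y * x * x) + x := by
    rw [← mul_assoc, h, add_mul, one_mul, smul_mul_assoc]
  rw [lie_eq_one_add h, mul_add, add_mul, mul_smul_comm, smul_mul_assoc, hxyx, mul_one, one_mul]
  module

theorem lie_mul_eq (h : x * y = q • (y * x) + 1) : ⁅x, y⁆ * y = q • (y * ⁅x, y⁆) := by
  have hyxy : y * x * y = q • (y * (y * x)) + y := by
    rw [mul_assoc, h, mul_add, mul_one, mul_smul_comm]
  rw [lie_eq_one_add h, mul_add, add_mul, mul_smul_comm, smul_mul_assoc, hyxy, mul_one, one_mul]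
  module

theorem mul_lie_eq_inv_smul {q : Rˣ} (h : x * y = (q : R) • (y * x) + 1) :
    y * ⁅x, y⁆ = ((q⁻¹ : Rˣ) : R) • (⁅x, y⁆ * y) := by
  rw [lie_mul_eq h, smul_smul, Units.inv_mul, one_smul]

theorem lie_dvd_lie {q : Rˣ} (h : x * y = (q : R) • (y * x) + 1)
    (hgen : Algebra.adjoin R {x, y} = ⊤) (a b : A) : ⁅x, y⁆ ∣ ⁅a, b⁆ := by
  refine dvd_lie_of_adjoin_eq_top hgen ?_ ?_ a b
  · rintro a (rfl | rfl)
    · exact ⟨(q : R) • a, by rw [mul_lie_eq h, mul_smul_comm]⟩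
    · exact ⟨((q⁻¹ : Rˣ) : R) • a, by rw [mul_lie_eq_inv_smul h, mul_smul_comm]⟩
  · rintro a (rfl | rfl) b (rfl | rfl)
    · simp [Ring.lie_def]
    · exact dvd_rfl
    · exact ⟨-1, by simp [Ring.lie_def]⟩
    · simp [Ring.lie_def]

theorem mul_pow_succ_eq (h : x * y = q • (y * x) + 1) (n : ℕ) :
    x * y ^ (n + 1) =
      q ^ (n + 1) • (y ^ (n + 1) * x) + (∑ k ∈ Finset.range (n + 1), q ^ k) • y ^ n := by
  induction n with
  | zero => simp [h]
  | succ n ih =>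
    rw [pow_succ y (n + 1), ← mul_assoc, ih, Finset.sum_range_succ _ (n + 1), add_mul,
      smul_mul_assoc, smul_mul_assoc, mul_assoc _ x y, h, mul_add, mul_one, mul_smul_comm,
      ← mul_assoc, ← pow_succ y n]
    module

theorem span_pow_mul_pow_eq_top (h : x * y = q • (y * x) + 1)
    (hgen : Algebra.adjoin R {x, y} = ⊤) :
    Submodule.span R (Set.range fun ij : ℕ × ℕ => y ^ ij.1 * x ^ ij.2) = ⊤ := by
  set M := Submodule.span R (Set.range fun ij : ℕ × ℕ => y ^ ij.1 * x ^ ij.2)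
  have mem (i j : ℕ) : y ^ i * x ^ j ∈ M := Submodule.subset_span ⟨(i, j), rfl⟩
  refine submodule_eq_top_of_adjoin_eq_top hgen M (by simpa using mem 0 0) ?_
  have mul_mem {a : A} (ha : ∀ i j, a * (y ^ i * x ^ j) ∈ M) : ∀ m ∈ M, a * m ∈ M := fun m hm =>
    Submodule.span_le (p := M.comap (LinearMap.mulLeft R a)) |>.2
      (by rintro _ ⟨⟨i, j⟩, rfl⟩; exact ha i j) hm
  rintro a (rfl | rfl)
  · refine mul_mem fun i j => ?_
    cases i with
    | zero => simpa [pow_succ'] using mem 0 (j + 1)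
    | succ i =>
      rw [← mul_assoc, mul_pow_succ_eq h, add_mul, smul_mul_assoc, smul_mul_assoc, mul_assoc,
        ← pow_succ']
      exact M.add_mem (M.smul_mem _ (mem _ _)) (M.smul_mem _ (mem _ _))
  · exact mul_mem fun i j => by rw [← mul_assoc, ← pow_succ']; exact mem _ _

end QuantumWeylRelation

namespace QuantumWeyl

open Polynomial SkewMonoidAlgebra

section SkewLaurent

variable {K : Type*} [Field K]

/-- The automorphism `f(X) ↦ f(q * X)` of the polynomial ring. -/
noncomputable def dilation : Kˣ →* (K[X] ≃ₐ[K] K[X]) where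
  toFun q := algEquivOfCompEqX (C (q : K) * X) (C ((q⁻¹ : Kˣ) : K) * X)
    (by simp [← mul_assoc, ← C_mul]) (by simp [← mul_assoc, ← C_mul])
  map_one' := by ext1; simp
  map_mul' q r := AlgEquiv.coe_toAlgHom_injective <| algHom_ext <| by
    simp [mul_assoc, mul_left_comm]

theorem dilation_apply (q : Kˣ) (f : K[X]) : dilation q f = f.comp (C (q : K) * X) := rfl

theorem dilation_X (q : Kˣ) : dilation q X = C (q : K) * X := X_comp

theorem dilation_injective : Function.Injective (dilation (K := K)) := fun q r h => by
  have hX := DFunLike.congr_fun h X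
  rw [dilation_X, dilation_X] at hX
  simpa [Units.ext_iff] using congr_arg (fun f => Polynomial.coeff f 1) hX

theorem degree_dilation (q : Kˣ) (f : K[X]) : (dilation q f).degree = f.degree := by
  rw [dilation_apply, degree_comp] <;> simp [degree_C_mul_X q.ne_zero]

variable (q : Kˣ)

/-- The skew Laurent polynomial ring `K[X][T, T⁻¹; σ]` with `T * f = σ f * T`, where `σ` is the
dilation by `q`. The powers of `T` are encoded as elements of the group generated by `σ`, which is
infinite cyclic when `q` is not a root of unity. -/
abbrev SkewLaurent := SkewMonoidAlgebra K[X] (Subgroup.zpowers (dilation q))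

/-- The generator of the group of powers of the dilation by `q`. -/
noncomputable def shift : Subgroup.zpowers (dilation q) := ⟨dilation q, Subgroup.mem_zpowers _⟩

variable {q}

theorem exists_eq_shift_zpow (g : Subgroup.zpowers (dilation q)) : ∃ n : ℤ, g = shift q ^ n := by
  obtain ⟨_, n, rfl⟩ := g
  exact ⟨n, rfl⟩

theorem shift_zpow_smul (n : ℤ) (f : K[X]) : shift q ^ n • f = dilation (q ^ n) f := by
  rw [map_zpow]
  rfl

theorem degree_zpowers_smul (g : Subgroup.zpowers (dilation q)) (f : K[X]) :
    (g • f).degree = f.degree := by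
  obtain ⟨n, rfl⟩ := exists_eq_shift_zpow g
  rw [shift_zpow_smul, degree_dilation]

theorem natDegree_zpowers_smul (g : Subgroup.zpowers (dilation q)) (f : K[X]) :
    (g • f).natDegree = f.natDegree :=
  natDegree_eq_natDegree (degree_zpowers_smul g f)

theorem shift_zpow_injective (hq : ¬ IsOfFinOrder q) :
    Function.Injective fun n : ℤ => shift q ^ n := by
  rw [injective_zpow_iff_not_isOfFinOrder, ← Submonoid.isOfFinOrder_coe]
  exact (dilation_injective.isOfFinOrder_iff (x := q)).not.2 hq

theorem twoUniqueProds_zpowers_dilation (hq : ¬ IsOfFinOrder q) :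
    TwoUniqueProds (Subgroup.zpowers (dilation q)) :=
  let e : Multiplicative ℤ ≃* Subgroup.zpowers (dilation q) :=
    MulEquiv.ofBijective (zpowersHom _ (shift q)) ⟨shift_zpow_injective hq, fun g =>
      (exists_eq_shift_zpow g).imp fun _ => Eq.symm⟩
  e.twoUniqueProds_iff.1 inferInstance

/-- The polynomial `(X - 1) / (q - 1)`, whose value at `q ^ n` is the `q`-number `[n]_q`. -/
noncomputable def qNumber (q : Kˣ) : K[X] := C ((q : K) - 1)⁻¹ * (X - 1)

theorem C_sub_one_mul_qNumber (hq : q ≠ 1) : C ((q : K) - 1) * qNumber q = X - 1 := by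
  rw [qNumber, ← mul_assoc, ← C_mul, mul_inv_cancel₀ (sub_ne_zero.2 (Units.val_eq_one.not.2 hq)),
    C_1, one_mul]

theorem shift_smul_qNumber (hq : q ≠ 1) : shift q • qNumber q = C (q : K) * qNumber q + 1 := by
  have shift_smul : shift q • qNumber q = C ((q : K) - 1)⁻¹ * (C (q : K) * X - 1) := by
    rw [← zpow_one (shift q), shift_zpow_smul, zpow_one]
    simp [qNumber, dilation_apply]
  have inv_mul : C ((q : K) - 1)⁻¹ * (C (q : K) - 1) = 1 := by
    rw [← C_1, ← C_sub, ← C_mul, inv_mul_cancel₀ (sub_ne_zero.2 (Units.val_eq_one.not.2 hq))]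
  rw [shift_smul, qNumber]
  linear_combination inv_mul

theorem degree_qNumber (hq : q ≠ 1) : (qNumber q).degree = 1 := by
  rw [qNumber, degree_C_mul (inv_ne_zero (sub_ne_zero.2 (Units.val_eq_one.not.2 hq))), ← C_1,
    degree_X_sub_C]

/-- The polynomial whose value at `q ^ n` is the `q`-descending factorial
`[n]_q * [n - 1]_q * ⋯ * [n - i + 1]_q`. -/
noncomputable def qDescFactorial (q : Kˣ) (i : ℕ) : K[X] :=
  ∏ k ∈ Finset.range i, (shift q)⁻¹ ^ k • qNumber q

/-- The polynomials `qDescFactorial q i`, as a sequence containing one polynomial of each degree. -/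
noncomputable def qDescFactorialSequence (hq : q ≠ 1) : Polynomial.Sequence K where
  elems' := qDescFactorial q
  degree_eq' i := by simp [qDescFactorial, degree_prod, degree_zpowers_smul, degree_qNumber hq]

theorem natDegree_qDescFactorial (hq : q ≠ 1) (i : ℕ) : (qDescFactorial q i).natDegree = i :=
  (qDescFactorialSequence hq).natDegree_eq i

end SkewLaurent

section Embedding

variable {K : Type*} [Field K]

theorem wgen_mul_wgen (q : K) :
    wgen K q 0 * wgen K q 1 = q • (wgen K q 1 * wgen K q 0) + 1 := by
  simpa [wgen] using RingQuot.mkAlgHom_rel K (WeylRel.rel (q := q))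

theorem adjoin_wgen_eq_top (q : K) : Algebra.adjoin K {wgen K q 0, wgen K q 1} = ⊤ := by
  have range_wgen : Set.range (wgen K q) = {wgen K q 0, wgen K q 1} := by
    ext; simp [Fin.exists_fin_two, eq_comm]
  rw [← range_wgen, show wgen K q = RingQuot.mkAlgHom K (WeylRel K q) ∘ FreeAlgebra.ι K from rfl,
    Set.range_comp, ← AlgHom.map_adjoin, FreeAlgebra.adjoin_range_ι, Algebra.map_top,
    AlgHom.range_eq_top]
  exact RingQuot.mkAlgHom_surjective K _

variable {q : Kˣ}

theorem ne_one_of_not_isOfFinOrder (hq : ¬ IsOfFinOrder q) : q ≠ 1 := by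
  rintro rfl
  exact hq IsOfFinOrder.one

/-- The embedding of the quantum Weyl algebra in the skew Laurent ring with `x ↦ T` and
`y ↦ T⁻¹ * (X - 1) / (q - 1)`, chosen so that the commutator of `x` and `y` is mapped to `X`. -/
noncomputable def toSkewLaurent (hq : ¬ IsOfFinOrder q) :
    QuantumWeyl K (q : K) →ₐ[K] SkewLaurent q :=
  RingQuot.liftAlgHom K
    ⟨FreeAlgebra.lift K ![single (shift q) 1, single (shift q)⁻¹ (qNumber q)], by
      rintro _ _ ⟨⟩
      simp [single_mul_single, smul_single, shift_smul_qNumber (ne_one_of_not_isOfFinOrder hq),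
        single_add, smul_eq_C_mul]⟩

theorem toSkewLaurent_x (hq : ¬ IsOfFinOrder q) :
    toSkewLaurent hq (wgen K (q : K) 0) = single (shift q) 1 := by
  simp [toSkewLaurent, wgen]

theorem toSkewLaurent_y (hq : ¬ IsOfFinOrder q) :
    toSkewLaurent hq (wgen K (q : K) 1) = single (shift q)⁻¹ (qNumber q) := by
  simp [toSkewLaurent, wgen]

theorem toSkewLaurent_lie (hq : ¬ IsOfFinOrder q) :
    toSkewLaurent hq ⁅wgen K (q : K) 0, wgen K (q : K) 1⁆ = single 1 X := by
  rw [lie_eq_one_add (wgen_mul_wgen (q : K)), map_add, map_one, map_smul, map_mul, toSkewLaurent_x,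
    toSkewLaurent_y, single_mul_single, inv_mul_cancel, smul_one, mul_one, smul_single,
    smul_eq_C_mul, C_sub_one_mul_qNumber (ne_one_of_not_isOfFinOrder hq), ← single_one_one,
    ← single_add, add_sub_cancel]

theorem toSkewLaurent_x_pow (hq : ¬ IsOfFinOrder q) (j : ℕ) :
    toSkewLaurent hq (wgen K (q : K) 0 ^ j) = single (shift q ^ j) 1 := by
  induction j with
  | zero => simp [single_one_one]
  | succ j ih => rw [pow_succ, map_mul, ih, toSkewLaurent_x, single_mul_single, smul_one, mul_one,
      pow_succ]

theorem toSkewLaurent_y_pow (hq : ¬ IsOfFinOrder q) (i : ℕ) :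
    toSkewLaurent hq (wgen K (q : K) 1 ^ i) = single ((shift q)⁻¹ ^ i) (qDescFactorial q i) := by
  induction i with
  | zero => simp [single_one_one, qDescFactorial]
  | succ i ih => rw [pow_succ, map_mul, ih, toSkewLaurent_y, single_mul_single, ← pow_succ,
      qDescFactorial, qDescFactorial, Finset.prod_range_succ]

theorem toSkewLaurent_y_pow_mul_x_pow (hq : ¬ IsOfFinOrder q) (i j : ℕ) :
    toSkewLaurent hq (wgen K (q : K) 1 ^ i * wgen K (q : K) 0 ^ j) =
      single (shift q ^ ((j : ℤ) - i)) (qDescFactorial q i) := by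
  rw [map_mul, toSkewLaurent_x_pow, toSkewLaurent_y_pow, single_mul_single, smul_one, mul_one,
    sub_eq_neg_add, zpow_add, zpow_neg, zpow_natCast, zpow_natCast, inv_pow]

theorem toSkewLaurent_injective (hq : ¬ IsOfFinOrder q) :
    Function.Injective (toSkewLaurent hq) := by
  have hq1 := ne_one_of_not_isOfFinOrder hq
  refine LinearMap.injective_of_linearIndependent (f := (toSkewLaurent hq).toLinearMap)
    (span_pow_mul_pow_eq_top (wgen_mul_wgen (q : K)) (adjoin_wgen_eq_top _)) ?_
  have index_injective : Function.Injective fun ij : ℕ × ℕ =>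
      (⟨shift q ^ ((ij.2 : ℤ) - ij.1), ij.1⟩ : (_ : Subgroup.zpowers (dilation q)) × ℕ) := by
    rintro ⟨i, j⟩ ⟨i', j'⟩ h
    obtain ⟨hzpow, rfl⟩ : shift q ^ ((j : ℤ) - i) = shift q ^ ((j' : ℤ) - i') ∧ i = i' := by
      simpa using h
    have := shift_zpow_injective hq hzpow
    grind
  have monomials_linearIndependent :=
    (Finsupp.linearIndependent_single (R := K) (ι := Subgroup.zpowers (dilation q))
      (fun _ => qDescFactorial q) fun _ =>
        (qDescFactorialSequence hq1).linearIndependent).comp _ index_injective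
  refine .of_comp (coeffLinearEquiv (S := K)).toLinearMap ?_
  convert monomials_linearIndependent
  ext1 ⟨i, j⟩
  exact congr_arg SkewMonoidAlgebra.coeff (toSkewLaurent_y_pow_mul_x_pow hq i j)

theorem noZeroDivisors (hq : ¬ IsOfFinOrder q) : NoZeroDivisors (QuantumWeyl K (q : K)) :=
  have := twoUniqueProds_zpowers_dilation hq
  have := noZeroDivisors_skewMonoidAlgebra (R := K[X]) (G := Subgroup.zpowers (dilation q))
  (toSkewLaurent_injective hq).noZeroDivisors _ (map_zero _) (map_mul _)

theorem qDescFactorial_dvd_coeff (hq : ¬ IsOfFinOrder q) (m : ℕ) (a : QuantumWeyl K (q : K)) :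
    qDescFactorial q m ∣ (toSkewLaurent hq a).coeff (shift q ^ (-m : ℤ)) := by
  classical
  have ha : a ∈ Submodule.span K (Set.range fun ij : ℕ × ℕ =>
      wgen K (q : K) 1 ^ ij.1 * wgen K (q : K) 0 ^ ij.2) := by
    rw [span_pow_mul_pow_eq_top (wgen_mul_wgen (q : K)) (adjoin_wgen_eq_top _)]
    exact Submodule.mem_top
  induction ha using Submodule.span_induction with
  | mem a ha =>
    obtain ⟨⟨i, j⟩, rfl⟩ := ha
    rw [toSkewLaurent_y_pow_mul_x_pow, coeff_single_apply]
    split_ifs with h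
    · have hm := shift_zpow_injective hq h
      exact Finset.prod_dvd_prod_of_subset _ _ _ (Finset.range_mono (by grind))
    · exact dvd_zero _
  | zero => simp
  | add a b _ _ ha hb => simpa using dvd_add ha hb
  | smul c a _ ha => simpa using dvd_smul_of_dvd c ha

theorem neg_le_natDegree (hq : ¬ IsOfFinOrder q) {a : QuantumWeyl K (q : K)} {n : ℤ} {f : K[X]}
    (ha : toSkewLaurent hq a = single (shift q ^ n) f) (hf : f ≠ 0) : -n ≤ f.natDegree := by
  obtain hn | ⟨m, rfl⟩ : 0 ≤ n ∨ ∃ m : ℕ, n = -m :=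
    (le_total 0 n).imp_right Int.exists_eq_neg_ofNat
  · omega
  · have dvd := qDescFactorial_dvd_coeff hq m a
    rw [ha, coeff_single, Finsupp.single_eq_same] at dvd
    have le := natDegree_le_of_dvd dvd hf
    rw [natDegree_qDescFactorial (ne_one_of_not_isOfFinOrder hq)] at le
    omega

theorem exists_eq_smul_one_of_mul_eq_one (hq : ¬ IsOfFinOrder q) {a b : QuantumWeyl K (q : K)}
    (hab : a * b = 1) : ∃ c : K, c ≠ 0 ∧ a = c • 1 := by
  have := twoUniqueProds_zpowers_dilation hq
  obtain ⟨g, r, s, ha, hb, hrs⟩ := exists_eq_single_of_mul_eq_one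
    (show toSkewLaurent hq a * toSkewLaurent hq b = 1 by rw [← map_mul, hab, map_one])
  obtain ⟨n, rfl⟩ := exists_eq_shift_zpow g
  have hr : r.natDegree = 0 := natDegree_eq_zero_of_isUnit (.of_mul_eq_one _ hrs)
  have hs : s.natDegree = 0 := by
    rw [← natDegree_zpowers_smul (shift q ^ n)]
    exact natDegree_eq_zero_of_isUnit (.of_mul_eq_one_right _ hrs)
  have neg_le : -n ≤ r.natDegree := neg_le_natDegree hq ha (left_ne_zero_of_mul_eq_one hrs)
  have le : - -n ≤ s.natDegree := neg_le_natDegree hq (hb.trans (by rw [zpow_neg]))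
    fun h => by simp [h] at hrs
  obtain rfl : n = 0 := by omega
  obtain ⟨c, rfl⟩ := natDegree_eq_zero.1 hr
  refine ⟨c, fun h => by simp [h] at hrs, toSkewLaurent_injective hq ?_⟩
  rw [ha, map_smul, map_one, ← single_one_one, smul_single, zpow_zero, smul_eq_C_mul, mul_one]

theorem exists_smul_eq_of_dvd_of_dvd (hq : ¬ IsOfFinOrder q) {a b : QuantumWeyl K (q : K)}
    (ha : a ≠ 0) (hab : a ∣ b) (hba : b ∣ a) : ∃ c : K, c ≠ 0 ∧ b = c • a := by
  have := noZeroDivisors hq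
  obtain ⟨u, rfl⟩ := hab
  obtain ⟨v, hv⟩ := hba
  have huv : u * v = 1 := mul_left_cancel₀ ha (by rw [← mul_assoc, ← hv, mul_one])
  obtain ⟨c, hc, rfl⟩ := exists_eq_smul_one_of_mul_eq_one hq huv
  exact ⟨c, hc, by rw [mul_smul_comm, mul_one]⟩

/-- Multiplication by `X` on the right of `f * T ^ n` amounts to multiplication by `q ^ n * X` on
the left, so distinct terms are distinguished by their commutation with `X`. -/
theorem exists_eq_single_of_mul_single_X_eq {w : SkewLaurent q} (hw : w ≠ 0) (r : Kˣ)
    (h : w * single 1 X = (r : K) • (single 1 X * w)) :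
    ∃ (g : Subgroup.zpowers (dilation q)) (f : K[X]),
      (g : K[X] ≃ₐ[K] K[X]) = dilation r ∧ f ≠ 0 ∧ w = single g f := by
  have eq_dilation {g} (hg : w.coeff g ≠ 0) : (g : K[X] ≃ₐ[K] K[X]) = dilation r := by
    refine AlgEquiv.coe_toAlgHom_injective (algHom_ext (mul_left_cancel₀ hg ?_))
    have hcoeff := congr_arg (fun w => SkewMonoidAlgebra.coeff w g) h
    rw [coeff_mul_single_one, SkewMonoidAlgebra.coeff_smul, Finsupp.smul_apply,
      coeff_single_one_mul] at hcoeff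
    calc w.coeff g * (g : K[X] ≃ₐ[K] K[X]) X = (r : K) • (X * w.coeff g) := hcoeff
      _ = w.coeff g * dilation r X := by rw [dilation_X, smul_eq_C_mul]; ring
  obtain ⟨g, hg⟩ := support_nonempty_of_ne_zero hw
  rw [SkewMonoidAlgebra.mem_support_iff] at hg
  exact ⟨g, w.coeff g, eq_dilation hg, hg, eq_single_of_coeff_eq_zero g fun g' hg' =>
    Subtype.ext ((eq_dilation hg').trans (eq_dilation hg).symm)⟩

end Embedding

section Classification

variable {K : Type*} [Field K] {q : Kˣ}

theorem ne_zero_and_natDegree_eq_one_of_smul_X_eq {f : K[X]} {c r : K} (hc : c ≠ 0)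
    (h : c • X = 1 + r • f) : r ≠ 0 ∧ f.natDegree = 1 := by
  have hr : r ≠ 0 := by
    rintro rfl
    simpa [hc, Polynomial.coeff_one] using congr_arg (Polynomial.coeff · 1) h
  refine ⟨hr, ?_⟩
  calc f.natDegree = (r • f).natDegree := (natDegree_smul f hr).symm
    _ = (C c * X + C (-1)).natDegree := by
      rw [← smul_eq_C_mul, h, C_neg, C_1, add_neg_cancel_comm]
    _ = 1 := natDegree_linear hc

theorem exists_eq_smul_of_toSkewLaurent_eq_single (hq : ¬ IsOfFinOrder q)
    {u v : QuantumWeyl K (q : K)} {f g : K[X]} (hu : toSkewLaurent hq u = single (shift q) f)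
    (hv : toSkewLaurent hq v = single (shift q)⁻¹ g) (hg : g ≠ 0)
    (hdeg : f.natDegree + g.natDegree = 1) :
    ∃ a b : K, u = a • wgen K (q : K) 0 ∧ v = b • wgen K (q : K) 1 := by
  have dvd : qNumber q ∣ g := by
    simpa [hv, coeff_single, qDescFactorial] using qDescFactorial_dvd_coeff hq 1 v
  obtain ⟨h, rfl⟩ := dvd
  obtain ⟨hqNumber, hh⟩ := mul_ne_zero_iff.1 hg
  have natDegree_qNumber : (qNumber q).natDegree = 1 :=
    natDegree_eq_of_degree_eq_some (degree_qNumber (ne_one_of_not_isOfFinOrder hq))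
  rw [natDegree_mul hqNumber hh, natDegree_qNumber] at hdeg
  obtain ⟨a, rfl⟩ := natDegree_eq_zero.1 (show f.natDegree = 0 by omega)
  obtain ⟨b, rfl⟩ := natDegree_eq_zero.1 (show h.natDegree = 0 by omega)
  refine ⟨a, b, toSkewLaurent_injective hq ?_, toSkewLaurent_injective hq ?_⟩
  · rw [hu, map_smul, toSkewLaurent_x, smul_single, smul_eq_C_mul, mul_one]
  · rw [hv, map_smul, toSkewLaurent_y, smul_single, smul_eq_C_mul, mul_comm]

theorem lie_wgen_ne_zero (hq : ¬ IsOfFinOrder q) :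
    ⁅wgen K (q : K) 0, wgen K (q : K) 1⁆ ≠ 0 := fun h => by
  have h' := toSkewLaurent_lie hq
  rw [h, map_zero, eq_comm, single_eq_zero] at h'
  exact X_ne_zero h'

theorem exists_toSkewLaurent_eq_single (hq : ¬ IsOfFinOrder q) {a : QuantumWeyl K (q : K)}
    (ha : a ≠ 0) (r : Kˣ)
    (h : a * ⁅wgen K (q : K) 0, wgen K (q : K) 1⁆ =
      (r : K) • (⁅wgen K (q : K) 0, wgen K (q : K) 1⁆ * a)) :
    ∃ (g : Subgroup.zpowers (dilation q)) (f : K[X]),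
      (g : K[X] ≃ₐ[K] K[X]) = dilation r ∧ f ≠ 0 ∧ toSkewLaurent hq a = single g f := by
  refine exists_eq_single_of_mul_single_X_eq
    ((map_ne_zero_iff _ (toSkewLaurent_injective hq)).2 ha) r ?_
  rw [← toSkewLaurent_lie hq, ← map_mul, h, map_smul, map_mul]

theorem exists_toSkewLaurent_eq_single_and_eq_single (hq : ¬ IsOfFinOrder q) {p : Kˣ} {c : K}
    {u v : QuantumWeyl K (q : K)} (h : u * v = (p : K) • (v * u) + 1) (hc : c ≠ 0)
    (hlie : ⁅u, v⁆ = c • ⁅wgen K (q : K) 0, wgen K (q : K) 1⁆) :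
    ∃ (n : ℤ) (f g : K[X]), toSkewLaurent hq u = single (shift q ^ n) f ∧
      toSkewLaurent hq v = single (shift q ^ (-n)) g ∧
      n ≠ 0 ∧ f ≠ 0 ∧ g ≠ 0 ∧ f.natDegree + g.natDegree = 1 := by
  have lie_ne_zero : ⁅u, v⁆ ≠ 0 := hlie ▸ smul_ne_zero hc (lie_wgen_ne_zero hq)
  have u_comm := mul_lie_eq h
  have v_comm := mul_lie_eq_inv_smul h
  rw [hlie, mul_smul_comm, smul_mul_assoc, smul_comm] at u_comm v_comm
  obtain ⟨φ, f, hφ, hf, hu⟩ := exists_toSkewLaurent_eq_single hq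
    (fun hu => lie_ne_zero (by simp [hu, Ring.lie_def])) p (smul_right_injective _ hc u_comm)
  obtain ⟨ψ, g, hψ, hg, hv⟩ := exists_toSkewLaurent_eq_single hq
    (fun hv => lie_ne_zero (by simp [hv, Ring.lie_def])) p⁻¹ (smul_right_injective _ hc v_comm)
  obtain rfl : ψ = φ⁻¹ := Subtype.ext (by rw [hψ, map_inv, ← hφ]; rfl)
  obtain ⟨n, rfl⟩ := exists_eq_shift_zpow φ
  have lie_eq : c • X = 1 + ((p : K) - 1) • (g * (shift q ^ n)⁻¹ • f) := by
    refine single_injective (1 : Subgroup.zpowers (dilation q)) ?_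
    rw [← smul_single, ← toSkewLaurent_lie hq, ← map_smul, ← hlie, lie_eq_one_add h, map_add,
      map_one, map_smul, map_mul, hu, hv, single_mul_single, inv_mul_cancel, smul_single,
      single_add, single_one_one]
  obtain ⟨hp, hdeg⟩ := ne_zero_and_natDegree_eq_one_of_smul_X_eq hc lie_eq
  refine ⟨n, f, g, hu, by rw [hv, zpow_neg], ?_, hf, hg, ?_⟩
  · rintro rfl
    have dilation_eq_one : dilation p = 1 := by rw [← hφ, zpow_zero]; rfl
    rw [dilation_injective (dilation_eq_one.trans (map_one _).symm)] at hp
    exact hp (sub_self 1)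
  · rw [natDegree_mul hg ((smul_ne_zero_iff_ne _).2 hf), natDegree_zpowers_smul] at hdeg
    omega

theorem exists_eq_smul_of_lie_eq_smul (hq : ¬ IsOfFinOrder q) {p : Kˣ} {c : K}
    {u v : QuantumWeyl K (q : K)} (h : u * v = (p : K) • (v * u) + 1) (hc : c ≠ 0)
    (hlie : ⁅u, v⁆ = c • ⁅wgen K (q : K) 0, wgen K (q : K) 1⁆) :
    ∃ a b : K, (u = a • wgen K (q : K) 0 ∧ v = b • wgen K (q : K) 1) ∨
      (u = a • wgen K (q : K) 1 ∧ v = b • wgen K (q : K) 0) := by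
  obtain ⟨n, f, g, hu, hv, hn, hf, hg, hdeg⟩ :=
    exists_toSkewLaurent_eq_single_and_eq_single hq h hc hlie
  have neg_le : -n ≤ f.natDegree := neg_le_natDegree hq hu hf
  have le : - -n ≤ g.natDegree := neg_le_natDegree hq hv hg
  obtain rfl | rfl : n = 1 ∨ n = -1 := by omega
  · rw [zpow_one] at hu
    rw [zpow_neg_one] at hv
    obtain ⟨a, b, hab⟩ := exists_eq_smul_of_toSkewLaurent_eq_single hq hu hv hg hdeg
    exact ⟨a, b, .inl hab⟩
  · rw [zpow_neg_one] at hu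
    rw [neg_neg, zpow_one] at hv
    obtain ⟨b, a, hba⟩ := exists_eq_smul_of_toSkewLaurent_eq_single hq hv hu hf
      ((add_comm _ _).trans hdeg)
    exact ⟨a, b, .inr hba.symm⟩

theorem exists_eq_smul_of_adjoin_eq_top (hq : ¬ IsOfFinOrder q) {p : Kˣ}
    {u v : QuantumWeyl K (q : K)} (h : u * v = (p : K) • (v * u) + 1)
    (hgen : Algebra.adjoin K {u, v} = ⊤) :
    ∃ a b : K, (u = a • wgen K (q : K) 0 ∧ v = b • wgen K (q : K) 1) ∨
      (u = a • wgen K (q : K) 1 ∧ v = b • wgen K (q : K) 0) := by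
  obtain ⟨c, hc, hlie⟩ := exists_smul_eq_of_dvd_of_dvd hq (lie_wgen_ne_zero hq)
    (lie_dvd_lie (wgen_mul_wgen (q : K)) (adjoin_wgen_eq_top _) u v) (lie_dvd_lie h hgen _ _)
  exact exists_eq_smul_of_lie_eq_smul hq h hc hlie

end Classification

end QuantumWeyl

theorem quantumWeyl_image_degree_one_general (K : Type*) [Field K] (p q : Kˣ)
    (hq : ¬ IsOfFinOrder q) (θ : QuantumWeyl K (p : K) ≃ₐ[K] QuantumWeyl K (q : K)) :
    ∃ α β γ α' β' γ' : K,
      θ (wgen K (p : K) 0) =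
        α • wgen K (q : K) 0 + β • wgen K (q : K) 1 + algebraMap K (QuantumWeyl K (q : K)) γ ∧
      θ (wgen K (p : K) 1) =
        α' • wgen K (q : K) 0 + β' • wgen K (q : K) 1 +
          algebraMap K (QuantumWeyl K (q : K)) γ' := by
  have relation : θ (wgen K (p : K) 0) * θ (wgen K (p : K) 1) =
      (p : K) • (θ (wgen K (p : K) 1) * θ (wgen K (p : K) 0)) + 1 := by
    rw [← map_mul, QuantumWeyl.wgen_mul_wgen, map_add, map_smul, map_mul, map_one]
  have generates : Algebra.adjoin K {θ (wgen K (p : K) 0), θ (wgen K (p : K) 1)} = ⊤ := by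
    rw [← Set.image_pair, ← AlgEquiv.coe_toAlgHom, ← AlgHom.map_adjoin,
      QuantumWeyl.adjoin_wgen_eq_top, Algebra.map_top, AlgHom.range_eq_top]
    exact θ.surjective
  obtain ⟨a, b, ⟨hX, hY⟩ | ⟨hX, hY⟩⟩ :=
    QuantumWeyl.exists_eq_smul_of_adjoin_eq_top hq relation generates
  · exact ⟨a, 0, 0, 0, b, 0, by simp [hX], by simp [hY]⟩
  · exact ⟨0, a, 0, b, 0, 0, by simp [hX], by simp [hY]⟩

/-- for `p, q` non-roots of unity and `θ : A_1^p(K) → A_1^q(K)`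
an isomorphism, `θ(X)` and `θ(Y)` lie in the span of `{1, x, y}`. -/
theorem quantumWeyl_image_degree_one (K : Type*) [Field K] [CharZero K] (p q : Kˣ)
    (hp : ∀ n : ℕ, 0 < n → p ^ n ≠ 1) (hq : ∀ n : ℕ, 0 < n → q ^ n ≠ 1)
    (θ : QuantumWeyl K (p : K) ≃ₐ[K] QuantumWeyl K (q : K)) :
    ∃ α β γ α' β' γ' : K,
      θ (wgen K (p : K) 0) =
        α • wgen K (q : K) 0 + β • wgen K (q : K) 1 + algebraMap K (QuantumWeyl K (q : K)) γ ∧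
      θ (wgen K (p : K) 1) =
        α' • wgen K (q : K) 0 + β' • wgen K (q : K) 1 + algebraMap K (QuantumWeyl K (q : K)) γ' := by
  exact quantumWeyl_image_degree_one_general K p q
    (fun h => (isOfFinOrder_iff_pow_eq_one.1 h).elim fun n hn => hq n hn.1 hn.2) θ
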